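/- arXiv:2205.01584 — 2 statements merged into one kernel-verified Lean document; each statement's English description precedes it below -/
import Mathlib

section
/- Let β > 0, c > 0 and let τ : [0,∞) → Ω → [0,∞) be a process on a probability space (Ω, 𝓕, P) such that each τ_s is measurable, almost surely the path s ↦ τ_s(ω) is nondecreasing, and for all s ≥ 0 and λ ≥ 0 one has E[exp(−λ τ_s)] = exp(−c s λ^β). Define the first-passage time T(ω) = sSup { s ≥ 0 : τ_s(ω) < 1 } (with sSup ∅ = 0). Then for every p > 0 the p-th moment of T is finite: ∫⁻_Ω (T(ω))^p dP(ω) < ∞. -/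
open MeasureTheory ProbabilityTheory

/-!
If `T` exceeds `n`, then monotonicity of the path forces `τ n < 1`, and the Chernoff bound at a
single Laplace parameter makes the probability of that event decay exponentially in `n`. Hence `T`
has a finite exponential moment, and the exponential dominates every power of `T`.
-/

open scoped ENNReal

section TailSums

variable {Ω : Type*} [MeasurableSpace Ω] {μ : Measure Ω}

theorem le_add_tsum_indicator_Ioi {f : ℝ → ℝ≥0∞} (hf : Monotone f) (x : ℝ) :
    f x ≤ f 0 + ∑' n : ℕ, (Set.Ioi (n : ℝ)).indicator (fun _ => f (n + 1)) x := by
  rcases le_or_gt x 0 with hx | hx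
  · exact (hf hx).trans le_self_add
  · obtain ⟨n, hn⟩ := Nat.exists_eq_succ_of_ne_zero (Nat.ceil_pos.2 hx).ne'
    have hnx : (n : ℝ) < x := Nat.lt_ceil.1 (hn ▸ n.lt_succ_self)
    have hxn : x ≤ n + 1 := by exact_mod_cast hn ▸ Nat.le_ceil x
    calc f x ≤ f (n + 1) := hf hxn
      _ = (Set.Ioi (n : ℝ)).indicator (fun _ => f (n + 1)) x :=
        (Set.indicator_of_mem (Set.mem_Ioi.2 hnx) fun _ => f (n + 1)).symm
      _ ≤ ∑' n : ℕ, (Set.Ioi (n : ℝ)).indicator (fun _ => f (n + 1)) x := ENNReal.le_tsum n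
      _ ≤ _ := le_add_self

theorem lintegral_comp_le_add_tsum_measure_lt {f : ℝ → ℝ≥0∞} (hf : Monotone f) (X : Ω → ℝ) :
    ∫⁻ ω, f (X ω) ∂μ ≤
      f 0 * μ Set.univ + ∑' n : ℕ, f (n + 1) * μ {ω | (n : ℝ) < X ω} := by
  -- The tail events may be non-measurable; their measurable hulls have the same measure.
  let A (n : ℕ) : Set Ω := toMeasurable μ {ω | (n : ℝ) < X ω}
  have hA (n : ℕ) : MeasurableSet (A n) := measurableSet_toMeasurable _ _
  have subset_A (n : ℕ) : {ω | (n : ℝ) < X ω} ⊆ A n := subset_toMeasurable μ _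
  have indicator_le (n : ℕ) (ω : Ω) : (Set.Ioi (n : ℝ)).indicator (fun _ => f (n + 1)) (X ω) ≤
      (A n).indicator (fun _ => f (n + 1)) ω :=
    Set.indicator_apply_le'
      (fun hω => (Set.indicator_of_mem (subset_A n hω) fun _ => f (n + 1)).ge) fun _ => zero_le
  calc ∫⁻ ω, f (X ω) ∂μ
      ≤ ∫⁻ ω, (f 0 + ∑' n : ℕ, (A n).indicator (fun _ => f (n + 1)) ω) ∂μ := by
        refine lintegral_mono fun ω => (le_add_tsum_indicator_Ioi hf (X ω)).trans ?_
        gcongr with n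
        exact indicator_le n ω
    _ = f 0 * μ Set.univ + ∑' n : ℕ, f (n + 1) * μ (A n) := by
        rw [lintegral_add_left measurable_const, lintegral_const,
          lintegral_tsum fun n => (measurable_const.indicator (hA n)).aemeasurable]
        simp_rw [lintegral_indicator_const (hA _)]
    _ = _ := by simp only [A, measure_toMeasurable]

theorem lintegral_exp_mul_lt_top_of_measureReal_lt_le [IsFiniteMeasure μ] {X : Ω → ℝ}
    {a c C : ℝ} (ha : 0 ≤ a) (hac : a < c)
    (htail : ∀ n : ℕ, μ.real {ω | (n : ℝ) < X ω} ≤ C * Real.exp (-(c * n))) :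
    ∫⁻ ω, ENNReal.ofReal (Real.exp (a * X ω)) ∂μ < ∞ := by
  have exp_mono : Monotone fun x : ℝ => ENNReal.ofReal (Real.exp (a * x)) := fun x y hxy => by
    dsimp only
    gcongr
  have summable_geometric :
      Summable fun n : ℕ => Real.exp (a * (n + 1)) * (C * Real.exp (-(c * n))) := by
    refine ((Real.summable_exp_nat_mul_iff.2 (sub_neg.2 hac)).mul_left (C * Real.exp a)).congr
      fun n => ?_
    rw [mul_left_comm, ← Real.exp_add, mul_assoc, ← Real.exp_add]
    ring_nf
  refine (lintegral_comp_le_add_tsum_measure_lt exp_mono X).trans_lt (ENNReal.add_lt_top.2 ⟨?_, ?_⟩)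
  · exact ENNReal.mul_lt_top ENNReal.ofReal_lt_top (measure_lt_top μ _)
  · refine (ENNReal.tsum_le_tsum fun n => ?_).trans_lt summable_geometric.tsum_ofReal_lt_top
    rw [ENNReal.ofReal_mul (Real.exp_nonneg _), ← ofReal_measureReal]
    gcongr
    exact htail n

theorem lintegral_rpow_lt_top_of_lintegral_exp_mul_lt_top {X : Ω → ℝ} {a p : ℝ}
    (ha : 0 < a) (hp : 0 ≤ p) (hX : 0 ≤ᵐ[μ] X)
    (hexp : ∫⁻ ω, ENNReal.ofReal (Real.exp (a * X ω)) ∂μ < ∞) :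
    ∫⁻ ω, ENNReal.ofReal (X ω ^ p) ∂μ < ∞ := by
  have rpow_le_exp : ∀ᵐ ω ∂μ, X ω ^ p ≤ (p / a) ^ p * Real.exp (a * X ω) := by
    filter_upwards [hX] with ω hω
    simpa only [abs_of_nonneg hω, abs_of_pos ha] using
      rpow_abs_le_mul_exp_abs (X ω) hp ha.ne'
  calc ∫⁻ ω, ENNReal.ofReal (X ω ^ p) ∂μ
      ≤ ∫⁻ ω, ENNReal.ofReal ((p / a) ^ p) * ENNReal.ofReal (Real.exp (a * X ω)) ∂μ := by
        refine lintegral_mono_ae (rpow_le_exp.mono fun ω hω => ?_)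
        rw [← ENNReal.ofReal_mul (by positivity)]
        exact ENNReal.ofReal_le_ofReal hω
    _ = ENNReal.ofReal ((p / a) ^ p) * ∫⁻ ω, ENNReal.ofReal (Real.exp (a * X ω)) ∂μ :=
        lintegral_const_mul' _ _ ENNReal.ofReal_ne_top
    _ < ∞ := ENNReal.mul_lt_top ENNReal.ofReal_lt_top hexp

end TailSums

/-- The first-passage time of the path `s ↦ τ s ω` to the level `b`, as the supremum of the times
`s ≥ 0` at which the path is strictly below `b`. It is `0` if there is no such time, and also, by
the convention for `sSup` on `ℝ`, if there are arbitrarily large such times. -/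
noncomputable def firstPassageTime {Ω : Type*} (τ : ℝ → Ω → ℝ) (b : ℝ) (ω : Ω) : ℝ :=
  sSup {s : ℝ | 0 ≤ s ∧ τ s ω < b}

section FirstPassageTime

variable {Ω : Type*} {τ : ℝ → Ω → ℝ} {b : ℝ}

theorem firstPassageTime_nonneg (ω : Ω) : 0 ≤ firstPassageTime τ b ω :=
  Real.sSup_nonneg fun _ hs => hs.1

theorem lt_of_lt_firstPassageTime {ω : Ω} (hmono : MonotoneOn (fun s => τ s ω) (Set.Ici 0))
    {t : ℝ} (ht : 0 ≤ t) (hlt : t < firstPassageTime τ b ω) : τ t ω < b := by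
  have below_nonempty : {s : ℝ | 0 ≤ s ∧ τ s ω < b}.Nonempty := by
    by_contra hempty
    rw [firstPassageTime, Set.not_nonempty_iff_eq_empty.1 hempty, Real.sSup_empty] at hlt
    exact hlt.not_ge ht
  obtain ⟨s, ⟨hs, hsb⟩, hts⟩ := exists_lt_of_lt_csSup below_nonempty hlt
  exact (hmono ht hs hts.le).trans_lt hsb

variable [MeasurableSpace Ω] {μ : Measure Ω} [IsFiniteMeasure μ]

theorem measureReal_lt_firstPassageTime_le_exp_mul_mgf
    (hmono : ∀ᵐ ω ∂μ, MonotoneOn (fun s => τ s ω) (Set.Ici 0)) {l t : ℝ} (hl : 0 ≤ l) (ht : 0 ≤ t)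
    (hint : Integrable (fun ω => Real.exp (-l * τ t ω)) μ) :
    μ.real {ω | t < firstPassageTime τ b ω} ≤ Real.exp (l * b) * mgf (τ t) μ (-l) :=
  calc μ.real {ω | t < firstPassageTime τ b ω}
      ≤ μ.real {ω | τ t ω ≤ b} := by
        refine ENNReal.toReal_mono (measure_ne_top μ _) (measure_mono_ae ?_)
        filter_upwards [hmono] with ω hω hlt
        exact (lt_of_lt_firstPassageTime hω ht hlt).le
    _ ≤ Real.exp (- -l * b) * mgf (τ t) μ (-l) :=
        measure_le_le_exp_mul_mgf b (neg_nonpos.2 hl) hint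
    _ = Real.exp (l * b) * mgf (τ t) μ (-l) := by rw [neg_neg]

theorem lintegral_exp_mul_firstPassageTime_lt_top
    (hmono : ∀ᵐ ω ∂μ, MonotoneOn (fun s => τ s ω) (Set.Ici 0)) {l a c C : ℝ} (hl : 0 ≤ l)
    (hint : ∀ n : ℕ, Integrable (fun ω => Real.exp (-l * τ n ω)) μ)
    (hmgf : ∀ n : ℕ, mgf (τ n) μ (-l) ≤ C * Real.exp (-(c * n))) (ha : 0 ≤ a) (hac : a < c) :
    ∫⁻ ω, ENNReal.ofReal (Real.exp (a * firstPassageTime τ b ω)) ∂μ < ∞ := by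
  refine lintegral_exp_mul_lt_top_of_measureReal_lt_le (C := Real.exp (l * b) * C) ha hac
    fun n => ?_
  calc μ.real {ω | (n : ℝ) < firstPassageTime τ b ω}
      ≤ Real.exp (l * b) * mgf (τ n) μ (-l) :=
        measureReal_lt_firstPassageTime_le_exp_mul_mgf hmono hl n.cast_nonneg (hint n)
    _ ≤ Real.exp (l * b) * (C * Real.exp (-(c * n))) := by gcongr; exact hmgf n
    _ = Real.exp (l * b) * C * Real.exp (-(c * n)) := (mul_assoc _ _ _).symm

theorem first_passage_time_finite_moments_general
    (hmono : ∀ᵐ ω ∂μ, MonotoneOn (fun s => τ s ω) (Set.Ici 0)) {l c C : ℝ} (hl : 0 ≤ l)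
    (hc : 0 < c) (hint : ∀ n : ℕ, Integrable (fun ω => Real.exp (-l * τ n ω)) μ)
    (hmgf : ∀ n : ℕ, mgf (τ n) μ (-l) ≤ C * Real.exp (-(c * n))) {p : ℝ} (hp : 0 ≤ p) :
    ∫⁻ ω, ENNReal.ofReal (firstPassageTime τ b ω ^ p) ∂μ < ∞ :=
  lintegral_rpow_lt_top_of_lintegral_exp_mul_lt_top (half_pos hc) hp
    (ae_of_all μ firstPassageTime_nonneg)
    (lintegral_exp_mul_firstPassageTime_lt_top hmono hl hint hmgf (half_pos hc).le
      (half_lt_self hc))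

end FirstPassageTime

/-- For a nondecreasing process `τ` with Laplace transform
`E[exp(−λ τ_s)] = exp(−c s λ^β)` (`c > 0`, `β > 0`), the first-passage time
`T(ω) = sSup {s ≥ 0 : τ_s(ω) < 1}` has finite moments of all positive orders. -/
theorem first_passage_time_finite_moments
    {Ω : Type*} [MeasurableSpace Ω] (P : Measure Ω) [IsProbabilityMeasure P]
    (β c : ℝ) (hβ : 0 < β) (hc : 0 < c) (τ : ℝ → Ω → ℝ)
    (hmeas : ∀ s : ℝ, Measurable (τ s))
    (hmono : ∀ᵐ ω ∂P, MonotoneOn (fun s => τ s ω) (Set.Ici (0 : ℝ)))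
    (hLap : ∀ s l : ℝ, 0 ≤ s → 0 ≤ l →
      ∫ ω, Real.exp (-(l * τ s ω)) ∂P = Real.exp (-(c * s * l ^ β))) :
    ∀ p : ℝ, 0 < p →
      ∫⁻ ω, ENNReal.ofReal ((sSup {s : ℝ | 0 ≤ s ∧ τ s ω < 1}) ^ p) ∂P < ⊤ := by
  intro p hp
  have mgf_eq (n : ℕ) : mgf (τ n) P (-1) = Real.exp (-(c * n)) := by
    simpa [mgf] using hLap n 1 n.cast_nonneg zero_le_one
  exact first_passage_time_finite_moments_general hmono zero_le_one hc
    (fun n => mgf_pos_iff.1 (mgf_eq n ▸ Real.exp_pos _))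
    (fun n => (mgf_eq n).le.trans_eq (one_mul _).symm) hp.le
end

section
/- Let μ and ν be Borel measures on ℂ that are both invariant under every rotation about the origin, i.e. for every θ ∈ ℝ the pushforward of μ (respectively ν) under the map z ↦ exp(θ·i)·z equals μ (respectively ν). Suppose that for every r > 0 one has μ(closedBall(0,r)) = ν(closedBall(0,r)) < ∞. Then μ = ν. -/
open MeasureTheory

/-!
Averaging over a compact group `G` of symmetries gives `μ A = ∫ P {g | g • x ∈ A} dμ(x)` for every
`G`-invariant `μ`, where `P` is the invariant probability measure on `G`. The integrand is constant
on orbits. If the orbits are the spheres about a point `o`, it is a function of `dist x o`, and this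
function is Borel because a measurable map out of a standard Borel space is a quotient map onto its
range. Hence `μ` is determined by the law of `dist · o` under `μ`, i.e. by the masses of the
closed balls about `o`.
-/

open Filter Set Metric
open scoped Topology ENNReal

section Factorization

variable {X Y Z : Type*} [MeasurableSpace X] [MeasurableSpace Y] [MeasurableSpace Z]

theorem map_rangeFactorization_eq_of_map_eq {φ : X → Y} (hφ : Measurable φ) {μ ν : Measure X}
    (h : μ.map φ = ν.map φ) :
    μ.map (rangeFactorization φ) = ν.map (rangeFactorization φ) := by
  ext s hs
  obtain ⟨t, ht, rfl⟩ := hs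
  have hpre : rangeFactorization φ ⁻¹' (Subtype.val ⁻¹' t) = φ ⁻¹' t := rfl
  rw [Measure.map_apply hφ.rangeFactorization (measurable_subtype_coe ht),
    Measure.map_apply hφ.rangeFactorization (measurable_subtype_coe ht), hpre,
    ← Measure.map_apply hφ ht, ← Measure.map_apply hφ ht, h]

theorem exists_measurable_comp_rangeFactorization [StandardBorelSpace X]
    [MeasurableSpace.CountablySeparated Y] {φ : X → Y} (hφ : Measurable φ) {F : X → Z}
    (hF : Measurable F) (hfac : F.FactorsThrough φ) :
    ∃ h : range φ → Z, Measurable h ∧ F = h ∘ rangeFactorization φ := by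
  have hcomp : F = (F ∘ rangeSplitting φ) ∘ rangeFactorization φ :=
    funext fun x => hfac (apply_rangeSplitting φ (rangeFactorization φ x)).symm
  have : MeasurableSpace.CountablySeparated (range φ) := MeasurableSpace.Subtype.countablySeparated
  refine ⟨F ∘ rangeSplitting φ, ?_, hcomp⟩
  rwa [← hφ.rangeFactorization.measurable_comp_iff_of_surjective rangeFactorization_surjective,
    ← hcomp]

theorem lintegral_eq_of_map_eq_of_factorsThrough [StandardBorelSpace X]
    [MeasurableSpace.CountablySeparated Y] {φ : X → Y} (hφ : Measurable φ) {μ ν : Measure X}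
    (h : μ.map φ = ν.map φ) {F : X → ℝ≥0∞} (hF : Measurable F) (hfac : F.FactorsThrough φ) :
    ∫⁻ x, F x ∂μ = ∫⁻ x, F x ∂ν := by
  obtain ⟨f, hf, rfl⟩ := exists_measurable_comp_rangeFactorization hφ hF hfac
  calc ∫⁻ x, f (rangeFactorization φ x) ∂μ
      = ∫⁻ y, f y ∂μ.map (rangeFactorization φ) := (lintegral_map hf hφ.rangeFactorization).symm
    _ = ∫⁻ y, f y ∂ν.map (rangeFactorization φ) := by
      rw [map_rangeFactorization_eq_of_map_eq hφ h]
    _ = ∫⁻ x, f (rangeFactorization φ x) ∂ν := lintegral_map hf hφ.rangeFactorization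

end Factorization

section OrbitAverage

variable {G X : Type*} [MeasurableSpace G] [MeasurableSpace X] [SMul G X] [MeasurableSMul₂ G X]

theorem measurable_measure_smul_mem (P : Measure G) [SFinite P] {A : Set X}
    (hA : MeasurableSet A) : Measurable fun x => P {g | g • x ∈ A} :=
  measurable_measure_prodMk_right (measurable_smul hA)

theorem lintegral_measure_smul_mem_eq (P : Measure G) [IsProbabilityMeasure P] (μ : Measure X)
    [SFinite μ] [SMulInvariantMeasure G X μ] {A : Set X} (hA : MeasurableSet A) :
    ∫⁻ x, P {g | g • x ∈ A} ∂μ = μ A := by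
  have hS : MeasurableSet ((fun p : G × X => p.1 • p.2) ⁻¹' A) := measurable_smul hA
  calc ∫⁻ x, P {g | g • x ∈ A} ∂μ
      = P.prod μ ((fun p : G × X => p.1 • p.2) ⁻¹' A) := (Measure.prod_apply_symm hS).symm
    _ = ∫⁻ g, μ ((g • ·) ⁻¹' A) ∂P := Measure.prod_apply hS
    _ = ∫⁻ _, μ A ∂P := lintegral_congr fun g => SMulInvariantMeasure.measure_preimage_smul g hA
    _ = μ A := by simp

end OrbitAverage

section OrbitDetermination

variable {G X : Type*} [Group G] [MeasurableSpace G] [MeasurableMul G] [MulAction G X]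

theorem measure_smul_smul_mem_eq (P : Measure G) [P.IsMulRightInvariant]
    (A : Set X) (h : G) (x : X) :
    P {g | g • h • x ∈ A} = P {g | g • x ∈ A} := by
  simpa only [preimage_ofPred_eq, mul_smul] using measure_preimage_mul_right P h {g | g • x ∈ A}

theorem measure_eq_of_map_eq_of_smulInvariantMeasure [MeasurableSpace X] [MeasurableSMul₂ G X]
    [StandardBorelSpace X] {Y : Type*} [MeasurableSpace Y] [MeasurableSpace.CountablySeparated Y]
    (P : Measure G) [IsProbabilityMeasure P] [P.IsMulRightInvariant]
    {φ : X → Y} (hφ : Measurable φ) (horbit : ∀ x y, φ x = φ y → ∃ g : G, g • x = y)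
    {μ ν : Measure X} [SFinite μ] [SFinite ν] [SMulInvariantMeasure G X μ]
    [SMulInvariantMeasure G X ν] (h : μ.map φ = ν.map φ) : μ = ν := by
  ext A hA
  have hfac : (fun x => P {g | g • x ∈ A}).FactorsThrough φ := fun x y hxy => by
    obtain ⟨g, rfl⟩ := horbit x y hxy
    exact (measure_smul_smul_mem_eq P A g x).symm
  rw [← lintegral_measure_smul_mem_eq P μ hA, ← lintegral_measure_smul_mem_eq P ν hA]
  exact lintegral_eq_of_map_eq_of_factorsThrough hφ h (measurable_measure_smul_mem P hA) hfac

end OrbitDetermination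

theorem exists_isProbabilityMeasure_isMulRightInvariant (G : Type*) [Group G] [TopologicalSpace G]
    [IsTopologicalGroup G] [CompactSpace G] [MeasurableSpace G] [BorelSpace G] :
    ∃ P : Measure G, IsProbabilityMeasure P ∧ P.IsMulRightInvariant := by
  have : IsProbabilityMeasure (Measure.haarMeasure (⊤ : TopologicalSpace.PositiveCompacts G)) :=
    ⟨Measure.haarMeasure_self⟩
  exact ⟨(Measure.haarMeasure ⊤).inv, Measure.isProbabilityMeasure_map measurable_inv.aemeasurable,
    inferInstance⟩

section ClosedBall

variable {X : Type*} [PseudoMetricSpace X] [MeasurableSpace X] {μ ν : Measure X} {o : X}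

theorem isLocallyFiniteMeasure_of_measure_closedBall_lt_top
    (hfin : ∀ r > 0, μ (closedBall o r) < ∞) : IsLocallyFiniteMeasure μ where
  finiteAtNhds x := by
    have hx : x ∈ ball o (dist x o + 1) := mem_ball.2 (lt_add_one _)
    exact ⟨closedBall o (dist x o + 1),
      mem_of_superset (isOpen_ball.mem_nhds hx) ball_subset_closedBall, hfin _ (by positivity)⟩

variable [OpensMeasurableSpace X]

theorem tendsto_measure_closedBall_nhdsGT {r : ℝ} (hfin : ∃ s > r, μ (closedBall o s) ≠ ∞) :
    Tendsto (fun s => μ (closedBall o s)) (𝓝[>] r) (𝓝 (μ (closedBall o r))) := by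
  rw [← biInter_gt_closedBall o r]
  exact tendsto_measure_biInter_gt (fun _ _ => measurableSet_closedBall.nullMeasurableSet)
    (fun _ _ _ hst => closedBall_subset_closedBall hst) hfin

theorem measure_closedBall_eq_of_forall_gt {r : ℝ}
    (heq : ∀ s > r, μ (closedBall o s) = ν (closedBall o s))
    (hfin : ∃ s > r, μ (closedBall o s) ≠ ∞) : μ (closedBall o r) = ν (closedBall o r) := by
  have hfin' : ∃ s > r, ν (closedBall o s) ≠ ∞ :=
    hfin.imp fun s ⟨hrs, hs⟩ => ⟨hrs, heq s hrs ▸ hs⟩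
  refine tendsto_nhds_unique_of_eventuallyEq (tendsto_measure_closedBall_nhdsGT hfin)
    (tendsto_measure_closedBall_nhdsGT hfin') ?_
  filter_upwards [self_mem_nhdsWithin] with s hs using heq s hs

theorem map_dist_apply_Iic (μ : Measure X) (o : X) (r : ℝ) :
    μ.map (dist · o) (Iic r) = μ (closedBall o r) :=
  Measure.map_apply (by fun_prop) measurableSet_Iic

theorem map_dist_eq_of_measure_closedBall_eq
    (heq : ∀ r > 0, μ (closedBall o r) = ν (closedBall o r))
    (hfin : ∀ r > 0, μ (closedBall o r) < ∞) :
    μ.map (dist · o) = ν.map (dist · o) := by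
  refine Measure.ext_of_generateFrom_of_iUnion (range Iic) (fun n : ℕ => Iic ((n : ℝ) + 1))
    ((BorelSpace.measurable_eq (α := ℝ)).trans (borel_eq_generateFrom_Iic ℝ))
    isPiSystem_Iic ?_ (fun n => mem_range_self _) (fun n => ?_) ?_
  · refine eq_univ_of_forall fun x => mem_iUnion.2 ?_
    obtain ⟨n, hn⟩ := exists_nat_ge x
    exact ⟨n, hn.trans (le_add_of_nonneg_right zero_le_one)⟩
  · rw [map_dist_apply_Iic]
    exact (hfin _ (by positivity)).ne
  · rintro _ ⟨r, rfl⟩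
    rw [map_dist_apply_Iic, map_dist_apply_Iic]
    rcases lt_or_ge r 0 with hneg | hnonneg
    · simp only [closedBall_eq_empty.2 hneg, measure_empty]
    · exact measure_closedBall_eq_of_forall_gt (fun s hs => heq s (hnonneg.trans_lt hs))
        ⟨r + 1, lt_add_one r, (hfin _ (by positivity)).ne⟩

end ClosedBall

theorem rotation_invariant_measures_eq_of_closedBall_eq_general
    (G : Type*) {X : Type*} [Group G] [TopologicalSpace G] [IsTopologicalGroup G] [CompactSpace G]
    [MetricSpace X] [PolishSpace X] [MeasurableSpace X] [BorelSpace X]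
    [MulAction G X] [ContinuousSMul G X] (o : X)
    (htrans : ∀ x y : X, dist x o = dist y o → ∃ g : G, g • x = y)
    (μ ν : Measure X) [SMulInvariantMeasure G X μ] [SMulInvariantMeasure G X ν]
    (heq : ∀ r > 0, μ (closedBall o r) = ν (closedBall o r))
    (hfin : ∀ r > 0, μ (closedBall o r) < ∞) :
    μ = ν := by
  borelize G
  obtain ⟨P, _, _⟩ := exists_isProbabilityMeasure_isMulRightInvariant G
  have := isLocallyFiniteMeasure_of_measure_closedBall_lt_top hfin
  have := isLocallyFiniteMeasure_of_measure_closedBall_lt_top fun r hr => heq r hr ▸ hfin r hr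
  exact measure_eq_of_map_eq_of_smulInvariantMeasure P (by fun_prop) htrans
    (map_dist_eq_of_measure_closedBall_eq heq hfin)

theorem smulInvariantMeasure_circle_of_map_exp_mul_eq {μ : Measure ℂ}
    (hrot : ∀ θ : ℝ, Measure.map (fun z => Complex.exp (θ * Complex.I) * z) μ = μ) :
    SMulInvariantMeasure Circle ℂ μ where
  measure_preimage_smul c s hs := by
    obtain ⟨θ, rfl⟩ : ∃ θ : ℝ, Circle.exp θ = c := ⟨_, Circle.exp_arg c⟩
    conv_rhs => rw [← hrot θ, Measure.map_apply (by fun_prop) hs]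
    rfl

theorem exists_circle_smul_eq_of_norm_eq {z w : ℂ} (h : ‖z‖ = ‖w‖) : ∃ c : Circle, c • z = w := by
  refine ⟨Circle.exp (w.arg - z.arg), ?_⟩
  rw [Circle.smul_def, Circle.coe_exp, smul_eq_mul]
  calc Complex.exp ((w.arg - z.arg : ℝ) * Complex.I) * z
      = Complex.exp ((w.arg - z.arg : ℝ) * Complex.I) *
          (‖z‖ * Complex.exp (z.arg * Complex.I)) := by rw [Complex.norm_mul_exp_arg_mul_I]
    _ = ‖w‖ * Complex.exp (w.arg * Complex.I) := by
      rw [h, mul_left_comm, ← Complex.exp_add]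
      push_cast
      ring_nf
    _ = w := Complex.norm_mul_exp_arg_mul_I w

/-- Two rotation-invariant Borel measures on `ℂ` that assign the same finite
mass to every closed disk centered at the origin are equal. -/
theorem rotation_invariant_measures_eq_of_closedBall_eq
    (μ ν : Measure ℂ)
    (hμrot : ∀ θ : ℝ, Measure.map (fun z => Complex.exp (θ * Complex.I) * z) μ = μ)
    (hνrot : ∀ θ : ℝ, Measure.map (fun z => Complex.exp (θ * Complex.I) * z) ν = ν)
    (hball : ∀ r : ℝ, 0 < r →
      μ (Metric.closedBall 0 r) = ν (Metric.closedBall 0 r) ∧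
      μ (Metric.closedBall 0 r) < ⊤) :
    μ = ν := by
  have := smulInvariantMeasure_circle_of_map_exp_mul_eq hμrot
  have := smulInvariantMeasure_circle_of_map_exp_mul_eq hνrot
  exact rotation_invariant_measures_eq_of_closedBall_eq_general Circle 0
    (fun z w h => exists_circle_smul_eq_of_norm_eq (by simpa only [dist_zero_right] using h)) μ ν
    (fun r hr => (hball r hr).1) (fun r hr => (hball r hr).2)
end
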